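/- Let p be a prime, F a field of characteristic p, and r, s positive integers. Suppose the Kronecker product J_r ⊗ J_s is similar over F to the block-diagonal matrix consisting, for each 1 ≤ i ≤ t, of exactly m_i ≥ 1 diagonal blocks equal to J_{μ_i}, where μ_1 > ⋯ > μ_t > 0. Then for every 1 ≤ i ≤ t one has the closed formula m_i = (−1)^{i−1}(r + s) + 2·Σ_{j=1}^{i−1} (−1)^{i−1−j} μ_j − μ_i (as an identity of integers). -/

import Mathlib

open Kronecker

/-- The `m × m` Jordan block with eigenvalue `1`: ones on the main diagonal and the
superdiagonal, zeros elsewhere. -/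
def jordanBlock (F : Type*) [Zero F] [One F] (m : ℕ) : Matrix (Fin m) (Fin m) F :=
  Matrix.of fun i j => if (j : ℕ) = (i : ℕ) ∨ (j : ℕ) = (i : ℕ) + 1 then 1 else 0

/-- The block-diagonal matrix whose diagonal blocks are the Jordan blocks `J_{d i}`, `i : ι`. -/
def jordanBlockDiag (F : Type*) [Field F] {ι : Type} [DecidableEq ι] (d : ι → ℕ) :
    Matrix ((i : ι) × Fin (d i)) ((i : ι) × Fin (d i)) F :=
  Matrix.blockDiagonal' fun i => jordanBlock F (d i)

/-- Similarity of square matrices, possibly indexed by different (finite) types: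
both matrices represent the same linear endomorphism up to a linear change of basis. -/
def MatSimilar (F : Type*) [Field F] {n m : Type*} [Fintype n] [Fintype m]
    (A : Matrix n n F) (B : Matrix m m F) : Prop :=
  ∃ e : (n → F) ≃ₗ[F] (m → F), ∀ v, e (A.mulVec v) = B.mulVec (e v)

/-!
Up to a change of basis, `J_r ⊗ J_s` is multiplication by `1 + z` on
`F[x, y] / (x ^ r, y ^ s)`, where `z = (1 + x)(1 + y) - 1`. Since `z - x = (1 + x) y`, this algebra
is `F[x, z] / I` with `I = (x ^ r, (z - x) ^ s)`, which is homogeneous in `x` and `z`. Every colon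
ideal `(I : z ^ k)` is generated by homogeneous polynomials `f` and `z g` whose degrees sum to
`r + s - k`, with `f ≡ x ^ a` modulo `z`, so that `z ^ k A / z ^ (k + 1) A ≅ F[x] / (x ^ a)` and `a`
is the number of Jordan blocks of size greater than `k`. Moreover `(I : z ^ (k + 1)) = (f, g)`, and
one step of Euclidean division, comparing `f` and `g` modulo `z`, brings this pair into the same
form: the new exponent `a'` is `a`, or the degree `r + s - k - 1 - a` of `g`. For `k = μ_i - 1` the
number of blocks does change, so `a + a' = r + s - μ_i`, that is
`μ_i + m_i + 2 (m_1 + ⋯ + m_{i - 1}) = r + s`. Solving this recurrence gives the closed formula.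
-/

section HomogeneousPairs

open Polynomial
open scoped Polynomial.Bivariate

/-- The bivariate polynomials that are homogeneous of degree `d`. Degrees are integers, so that
dividing by a variable always lowers them by one, even for the zero polynomial. -/
def bihomogeneous (R : Type*) [CommRing R] (d : ℤ) : Submodule R R[X][Y] where
  carrier := {f | ∀ i j : ℕ, (f.coeff j).coeff i ≠ 0 → (i + j : ℤ) = d}
  zero_mem' := by simp
  add_mem' := by
    intro f g hf hg i j h
    by_contra hd
    simp [not_imp_comm.1 (hf i j) hd, not_imp_comm.1 (hg i j) hd] at h
  smul_mem' := by
    intro c f hf i j h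
    refine hf i j fun h0 => h ?_
    rw [coeff_smul, coeff_smul, h0, smul_zero]

namespace bihomogeneous

variable {R : Type*} [CommRing R] {d e : ℤ} {f g : R[X][Y]}

theorem monomial_monomial_mem (i j : ℕ) (c : R) :
    monomial j (monomial i c) ∈ bihomogeneous R (i + j) := by
  intro i' j' h
  rw [coeff_monomial] at h
  split_ifs at h with hj
  · rw [coeff_monomial] at h
    split_ifs at h with hi
    · rw [hi, hj]
    · exact absurd rfl h
  · exact absurd (coeff_zero _) h

theorem C_X_mem : (C X : R[X][Y]) ∈ bihomogeneous R 1 := by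
  simpa [monomial_one_one_eq_X] using monomial_monomial_mem 1 0 (1 : R)

theorem Y_mem : (Y : R[X][Y]) ∈ bihomogeneous R 1 := by
  simpa [monomial_one_one_eq_X] using monomial_monomial_mem 0 1 (1 : R)

theorem mul_mem (hf : f ∈ bihomogeneous R d) (hg : g ∈ bihomogeneous R e) :
    f * g ∈ bihomogeneous R (d + e) := by
  intro i j h
  rw [coeff_mul, finsetSum_coeff] at h
  obtain ⟨⟨j₁, j₂⟩, hj, h⟩ := Finset.exists_ne_zero_of_sum_ne_zero h
  rw [coeff_mul] at h
  obtain ⟨⟨i₁, i₂⟩, hi, h⟩ := Finset.exists_ne_zero_of_sum_ne_zero h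
  have hd := hf i₁ j₁ (left_ne_zero_of_mul h)
  have he := hg i₂ j₂ (right_ne_zero_of_mul h)
  rw [Finset.HasAntidiagonal.mem_antidiagonal] at hi hj
  dsimp only at hi hj
  omega

instance gradedMonoid : SetLike.GradedMonoid (bihomogeneous R) where
  one_mem := by simpa using monomial_monomial_mem 0 0 (1 : R)
  mul_mem _ _ _ _ := mul_mem

theorem pow_mem (hf : f ∈ bihomogeneous R 1) (n : ℕ) : f ^ n ∈ bihomogeneous R n := by
  simpa using SetLike.pow_mem_graded n hf

theorem divX_mem (hf : f ∈ bihomogeneous R d) : f.divX ∈ bihomogeneous R (d - 1) := by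
  intro i j h
  rw [coeff_divX] at h
  have := hf i (j + 1) h
  omega

theorem C_mem_of_coeff_zero_eq {a : ℕ} {q : R[X]} (hf : f ∈ bihomogeneous R d)
    (hq : f.coeff 0 = X ^ a * q) : C q ∈ bihomogeneous R (d - a) := by
  intro i j h
  rw [coeff_C] at h
  split_ifs at h with hj
  · have := hf (i + a) 0 (by rwa [hq, coeff_X_pow_mul])
    omega
  · exact absurd (coeff_zero i) h

theorem coeff_zero_eq_C_mul_X_pow {n : ℕ} (hf : f ∈ bihomogeneous R d)
    (hn : (f.coeff 0).coeff n ≠ 0) : f.coeff 0 = C ((f.coeff 0).coeff n) * X ^ n := by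
  ext i
  rw [coeff_C_mul_X_pow]
  split_ifs with hi
  · rw [hi]
  · by_contra h
    have h₁ := hf i 0 h
    have h₂ := hf n 0 hn
    omega

end bihomogeneous

theorem exists_span_pair_eq_span_pair_Y_mul {R : Type*} [CommRing R] {a : ℕ} {d : ℤ}
    {f h : R[X][Y]} (hf : f ∈ bihomogeneous R a) (hf₀ : f.coeff 0 = X ^ a)
    (hh : h ∈ bihomogeneous R d) (hdvd : X ^ a ∣ h.coeff 0) :
    ∃ g ∈ bihomogeneous R (d - 1), Ideal.span {f, h} = Ideal.span {f, Y * g} := by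
  obtain ⟨q, hq⟩ := hdvd
  have hqf : C q * f ∈ bihomogeneous R d := by
    simpa using bihomogeneous.mul_mem (bihomogeneous.C_mem_of_coeff_zero_eq hh hq) hf
  have hY : h - C q * f = Y * (h - C q * f).divX := by
    have h₀ : (h - C q * f).coeff 0 = 0 := by
      rw [coeff_sub, coeff_C_mul, hf₀, hq, mul_comm q, sub_self]
    have := divX_mul_X_add (h - C q * f)
    rw [h₀, C_0, add_zero, mul_comm] at this
    exact this.symm
  refine ⟨_, bihomogeneous.divX_mem (Submodule.sub_mem _ hh hqf), ?_⟩
  rw [← hY, Ideal.span_pair_sub_mul_left]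

/-- The pair `(f, Y * g)` is a normal form for two homogeneous generators whose degrees sum to `N`:
`f` has degree `a` and is congruent to `X ^ a` modulo `Y`, and the other generator is a multiple
of `Y`. -/
structure IsReducedPair {R : Type*} [CommRing R] (N : ℤ) (a : ℕ) (f g : R[X][Y]) : Prop where
  left_mem : f ∈ bihomogeneous R a
  coeff_zero_left : f.coeff 0 = X ^ a
  right_mem : g ∈ bihomogeneous R (N - a - 1)

namespace IsReducedPair

section CommRing

variable {R : Type*} [CommRing R] {N : ℤ} {a : ℕ} {f g : R[X][Y]}

theorem Y_mul_mem_span_iff (h : IsReducedPair N a f g) (p : R[X][Y]) :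
    Y * p ∈ Ideal.span {f, Y * g} ↔ p ∈ Ideal.span {f, g} := by
  simp only [Ideal.mem_span_pair]
  constructor
  · rintro ⟨u, v, huv⟩
    have hu : u.coeff 0 * X ^ a = 0 := by
      simpa [mul_coeff_zero, h.coeff_zero_left] using congrArg (coeff · 0) huv
    obtain ⟨u', rfl⟩ : Y ∣ u := X_dvd_iff.2 ((monic_X_pow a).mul_left_eq_zero_iff.1 hu)
    exact ⟨u', v, isRegular_X.left (by linear_combination huv)⟩
  · rintro ⟨u, v, rfl⟩
    exact ⟨Y * u, v, by ring⟩

theorem X_pow_dvd_iff_exists (h : IsReducedPair N a f g) (p : R[X]) :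
    X ^ a ∣ p ↔ ∃ q, C p - Y * q ∈ Ideal.span {f, Y * g} := by
  simp only [Ideal.mem_span_pair]
  constructor
  · rintro ⟨c, rfl⟩
    refine ⟨-(C c * f.divX), C c, 0, ?_⟩
    have := divX_mul_X_add f
    rw [h.coeff_zero_left] at this
    rw [C_mul]
    linear_combination - C c * this
  · rintro ⟨q, u, v, huv⟩
    refine ⟨u.coeff 0, ?_⟩
    simpa [mul_coeff_zero, h.coeff_zero_left, mul_comm] using (congrArg (coeff · 0) huv).symm

end CommRing

theorem exists_next {F : Type*} [Field F] {N : ℤ} {a : ℕ} {f g : F[X][Y]}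
    (h : IsReducedPair N a f g) :
    ∃ a' f' g', IsReducedPair (N - 1) a' f' g' ∧
      Ideal.span {f, g} = Ideal.span {f', Y * g'} ∧ (a' = a ∨ (a + a' : ℤ) = N - 1) := by
  by_cases hdvd : X ^ a ∣ g.coeff 0
  · obtain ⟨g', hg', hspan⟩ :=
      exists_span_pair_eq_span_pair_Y_mul h.left_mem h.coeff_zero_left h.right_mem hdvd
    exact ⟨a, f, g', ⟨h.left_mem, h.coeff_zero_left, by convert hg' using 2; ring⟩, hspan, .inl rfl⟩
  obtain ⟨b, hba, hb⟩ : ∃ b < a, (g.coeff 0).coeff b ≠ 0 := by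
    simpa [X_pow_dvd_iff] using hdvd
  set β := (g.coeff 0).coeff b
  have hdeg : (b : ℤ) = N - a - 1 := by simpa using h.right_mem b 0 hb
  have hf'₀ : (β⁻¹ • g).coeff 0 = X ^ b := by
    rw [coeff_smul, bihomogeneous.coeff_zero_eq_C_mul_X_pow h.right_mem hb, smul_eq_C_mul,
      ← mul_assoc, ← C_mul, inv_mul_cancel₀ hb, C_1, one_mul]
  have hf' : β⁻¹ • g ∈ bihomogeneous F b := hdeg ▸ Submodule.smul_mem _ _ h.right_mem
  obtain ⟨g', hg', hspan⟩ := exists_span_pair_eq_span_pair_Y_mul hf' hf'₀ h.left_mem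
    (h.coeff_zero_left ▸ pow_dvd_pow X hba.le)
  refine ⟨b, β⁻¹ • g, g', ⟨hf', hf'₀, ?_⟩, ?_, .inr (by omega)⟩
  · convert hg' using 2
    omega
  · have hg : Ideal.span {β⁻¹ • g} = Ideal.span {g} :=
      Submodule.span_singleton_group_smul_eq _ (Units.mk0 β⁻¹ (inv_ne_zero hb)) g
    rw [← hspan, Ideal.span_insert, Ideal.span_insert, hg, sup_comm]

end IsReducedPair

/-- The colon ideal `(I : Y ^ k)` is generated by a reduced pair whose degrees sum to `N - k` and
whose first generator has degree `a`. -/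
def HasReducedColon {R : Type*} [CommRing R] (I : Ideal R[X][Y]) (N : ℤ) (k a : ℕ) : Prop :=
  ∃ f g, IsReducedPair (N - k) a f g ∧ ∀ h, Y ^ k * h ∈ I ↔ h ∈ Ideal.span {f, Y * g}

theorem HasReducedColon.exists_succ {F : Type*} [Field F] {I : Ideal F[X][Y]} {N : ℤ} {k a : ℕ}
    (h : HasReducedColon I N k a) :
    ∃ a', HasReducedColon I N (k + 1) a' ∧ (a' = a ∨ (k + 1 + a + a' : ℤ) = N) := by
  obtain ⟨f, g, hfg, hI⟩ := h
  obtain ⟨a', f', g', hfg', hspan, ha'⟩ := hfg.exists_next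
  refine ⟨a', ⟨f', g', ?_, fun h => ?_⟩, ha'.imp_right fun h => by omega⟩
  · simpa only [Nat.cast_add, Nat.cast_one, sub_add_eq_sub_sub] using hfg'
  · rw [pow_succ, mul_assoc, hI, hfg.Y_mul_mem_span_iff, hspan]

/-- The relations satisfied by `x` and `x + w` when `x ^ r = 0` and `w ^ s = 0`. -/
noncomputable def truncationIdeal (R : Type*) [CommRing R] (r s : ℕ) : Ideal R[X][Y] :=
  Ideal.span {C X ^ r, (Y - C X) ^ s}

theorem exists_hasReducedColon_truncationIdeal (F : Type*) [Field F] (r s k : ℕ) :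
    ∃ a, HasReducedColon (truncationIdeal F r s) (r + s) k a := by
  induction k with
  | zero =>
    have h : IsReducedPair (r + s + 1) r (C X ^ r : F[X][Y]) ((Y - C X) ^ s) :=
      { left_mem := bihomogeneous.pow_mem bihomogeneous.C_X_mem r
        coeff_zero_left := by rw [← C_pow, coeff_C_zero]
        right_mem := by
          convert bihomogeneous.pow_mem
            (Submodule.sub_mem _ bihomogeneous.Y_mem bihomogeneous.C_X_mem) s using 2
          ring }
    obtain ⟨a, f, g, hfg, hspan, -⟩ := h.exists_next
    refine ⟨a, f, g, by simpa using hfg, fun h => ?_⟩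
    rw [pow_zero, one_mul, truncationIdeal, hspan]
  | succ k ih => exact ih.elim fun _ h => h.exists_succ.imp fun _ => And.left

end HomogeneousPairs

section ColonRank

open Polynomial Module
open scoped Polynomial.Bivariate

theorem finrank_map_mkQ_add_finrank {K V : Type*} [DivisionRing K] [AddCommGroup V] [Module K V]
    {p q : Submodule K V} [FiniteDimensional K q] (h : p ≤ q) :
    finrank K (q.map p.mkQ) + finrank K p = finrank K q := by
  have := (p.mkQ ∘ₗ q.subtype).finrank_range_add_finrank_ker
  rwa [LinearMap.range_comp, q.range_subtype, LinearMap.ker_comp, p.ker_mkQ,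
    (Submodule.comapSubtypeEquivOfLe h).finrank_eq] at this

theorem finrank_range_of_ker_eq_span {K V : Type*} [Field K] [AddCommGroup V] [Module K V]
    {L : K[X] →ₗ[K] V} {f : K[X]} (h : LinearMap.ker L = (Ideal.span {f}).restrictScalars K) :
    finrank K (LinearMap.range L) = f.natDegree := by
  rw [← L.quotKerEquivRange.finrank_eq, h]
  exact finrank_quotient_span_eq_natDegree

section MulLeftRange

variable {F A : Type*} [Field F] [CommRing A] [Algebra F A]

theorem mem_range_mulLeft_pow_iff {P : Type*} [CommRing P] [Algebra F P] {π : P →ₐ[F] A}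
    (hπ : Function.Surjective π) {y : P} {k : ℕ} {v : A} :
    v ∈ LinearMap.range (LinearMap.mulLeft F (π y) ^ k) ↔ ∃ q, π (y ^ k * q) = v := by
  simp only [LinearMap.mem_range, LinearMap.pow_mulLeft, LinearMap.mulLeft_apply, map_mul,
    map_pow, hπ.exists]

variable (π : F[X][Y] →ₐ[F] A) (k : ℕ)

/-- The map `p(x) ↦ y ^ k p(x)` from `F[X]` to the successive quotient of the powers of `y`, where
`y` is the image of `Y` under `π`. -/
noncomputable def powMulMkQ :
    F[X] →ₗ[F] A ⧸ LinearMap.range (LinearMap.mulLeft F (π Y) ^ (k + 1)) :=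
  Submodule.mkQ _ ∘ₗ π.toLinearMap ∘ₗ LinearMap.mulLeft F (Y ^ k) ∘ₗ
    (CAlgHom : F[X] →ₐ[F] F[X][Y]).toLinearMap

variable {π k}

theorem powMulMkQ_apply (p : F[X]) :
    powMulMkQ π k p = Submodule.Quotient.mk (π (Y ^ k * C p)) :=
  rfl

theorem range_powMulMkQ (hπ : Function.Surjective π) :
    LinearMap.range (powMulMkQ π k) =
      (LinearMap.range (LinearMap.mulLeft F (π Y) ^ k)).map (Submodule.mkQ _) := by
  ext v
  simp only [LinearMap.mem_range, Submodule.mem_map, mem_range_mulLeft_pow_iff hπ, powMulMkQ_apply]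
  constructor
  · rintro ⟨p, rfl⟩
    exact ⟨_, ⟨C p, rfl⟩, rfl⟩
  · rintro ⟨_, ⟨q, rfl⟩, rfl⟩
    refine ⟨q.coeff 0, ?_⟩
    rw [Submodule.mkQ_apply, Submodule.Quotient.eq, ← map_sub, mem_range_mulLeft_pow_iff hπ]
    exact ⟨-q.divX, congrArg π (by linear_combination -Y ^ k * divX_mul_X_add q)⟩

theorem ker_powMulMkQ {N : ℤ} {a : ℕ} (hπ : Function.Surjective π)
    (h : HasReducedColon (RingHom.ker π) N k a) :
    LinearMap.ker (powMulMkQ π k) = (Ideal.span {(X : F[X]) ^ a}).restrictScalars F := by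
  obtain ⟨f, g, hfg, hI⟩ := h
  ext p
  rw [LinearMap.mem_ker, powMulMkQ_apply, Submodule.Quotient.mk_eq_zero,
    mem_range_mulLeft_pow_iff hπ, Submodule.restrictScalars_mem, Ideal.mem_span_singleton,
    hfg.X_pow_dvd_iff_exists]
  refine exists_congr fun q => ?_
  rw [← hI, RingHom.mem_ker, mul_sub, map_sub, sub_eq_zero, eq_comm, pow_succ, mul_assoc]

theorem HasReducedColon.finrank_range_mulLeft_pow [FiniteDimensional F A] {N : ℤ} {a : ℕ}
    (hπ : Function.Surjective π) (h : HasReducedColon (RingHom.ker π) N k a) :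
    finrank F (LinearMap.range (LinearMap.mulLeft F (π Y) ^ k)) =
      finrank F (LinearMap.range (LinearMap.mulLeft F (π Y) ^ (k + 1))) + a := by
  have hle : LinearMap.range (LinearMap.mulLeft F (π Y) ^ (k + 1)) ≤
      LinearMap.range (LinearMap.mulLeft F (π Y) ^ k) :=
    (LinearMap.mulLeft F (π Y)).iterateRange.monotone k.le_succ
  rw [← finrank_map_mkQ_add_finrank hle, ← range_powMulMkQ hπ,
    finrank_range_of_ker_eq_span (ker_powMulMkQ hπ h), natDegree_X_pow, add_comm]

end MulLeftRange

end ColonRank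

section TruncatedPolynomial

open Polynomial Module

/-- The algebra `R[x] / (x ^ n)`; its element `x` is `AdjoinRoot.root (X ^ n)`. -/
abbrev TruncatedPolynomial (R : Type*) [CommRing R] (n : ℕ) : Type _ :=
  AdjoinRoot (X ^ n : R[X])

namespace TruncatedPolynomial

variable (R : Type*) [CommRing R] (n : ℕ)

theorem root_pow : (AdjoinRoot.root (X ^ n : R[X])) ^ n = 0 := by
  simpa using AdjoinRoot.eval₂_root (X ^ n : R[X])

variable [Nontrivial R]

/-- The basis `1, x, …, x ^ (n - 1)`. -/
noncomputable def basis : Basis (Fin n) R (TruncatedPolynomial R n) :=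
  (AdjoinRoot.powerBasis' (monic_X_pow n)).basis.reindex (finCongr (natDegree_X_pow n))

theorem basis_apply (i : Fin n) : basis R n i = AdjoinRoot.root (X ^ n : R[X]) ^ (i : ℕ) := by
  rw [basis, Basis.reindex_apply, PowerBasis.basis_eq_pow]
  rfl

/-- The basis `x ^ (n - 1), …, x, 1`, in which multiplication by `1 + x` is a Jordan block. -/
noncomputable def revBasis : Basis (Fin n) R (TruncatedPolynomial R n) :=
  (basis R n).reindex Fin.revPerm

theorem revBasis_apply (i : Fin n) :
    revBasis R n i = AdjoinRoot.root (X ^ n : R[X]) ^ (n - (i + 1)) := by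
  rw [revBasis, Basis.reindex_apply, basis_apply, Fin.revPerm_symm, Fin.revPerm_apply, Fin.val_rev]

instance : Module.Finite R (TruncatedPolynomial R n) :=
  Module.Finite.of_basis (basis R n)

theorem toMatrix_mulLeft_one_add_root :
    LinearMap.toMatrix (revBasis R n) (revBasis R n)
      (LinearMap.mulLeft R (1 + AdjoinRoot.root (X ^ n : R[X]))) = jordanBlock R n := by
  ext i ⟨j, hj⟩
  rw [LinearMap.toMatrix_apply, LinearMap.mulLeft_apply, add_mul, one_mul, map_add,
    Basis.repr_self, jordanBlock, Matrix.of_apply]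
  cases j with
  | zero =>
    have h : AdjoinRoot.root (X ^ n : R[X]) * revBasis R n ⟨0, hj⟩ = 0 := by
      rw [revBasis_apply, ← pow_succ', Nat.sub_add_cancel hj, root_pow]
    simp [h, Finsupp.single_apply, Fin.ext_iff, eq_comm]
  | succ j =>
    have h : AdjoinRoot.root (X ^ n : R[X]) * revBasis R n ⟨j + 1, hj⟩ =
        revBasis R n ⟨j, by omega⟩ := by
      rw [revBasis_apply, revBasis_apply, ← pow_succ']
      congr 1
      dsimp only
      omega
    simp only [h, Basis.repr_self, Finsupp.add_apply, Finsupp.single_apply, Fin.ext_iff]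
    grind

theorem finrank_range_mulLeft_root_pow (F : Type*) [Field F] (n k : ℕ) :
    finrank F (LinearMap.range (LinearMap.mulLeft F (AdjoinRoot.root (X ^ n : F[X])) ^ k)) =
      n - k := by
  let L : F[X] →ₗ[F] TruncatedPolynomial F n :=
    (LinearMap.mulLeft F (AdjoinRoot.root (X ^ n : F[X])) ^ k).comp
      (AdjoinRoot.mkₐ (X ^ n : F[X])).toLinearMap
  have hL (p : F[X]) : L p = AdjoinRoot.mk (X ^ n) (X ^ k * p) := by
    simp [L, LinearMap.pow_mulLeft]
  have hker : LinearMap.ker L = (Ideal.span {(X : F[X]) ^ (n - k)}).restrictScalars F := by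
    ext p
    rw [LinearMap.mem_ker, hL, AdjoinRoot.mk_eq_zero, Submodule.restrictScalars_mem,
      Ideal.mem_span_singleton]
    obtain hk | hk := le_total n k
    · simp [Nat.sub_eq_zero_of_le hk, (pow_dvd_pow X hk).mul_right]
    · rw [← pow_mul_pow_sub X hk, mul_dvd_mul_iff_left (pow_ne_zero k X_ne_zero)]
  have hrange : LinearMap.range L =
      LinearMap.range (LinearMap.mulLeft F (AdjoinRoot.root (X ^ n : F[X])) ^ k) :=
    LinearMap.range_comp_of_range_eq_top _ (LinearMap.range_eq_top.2 AdjoinRoot.mk_surjective)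
  rw [← hrange, finrank_range_of_ker_eq_span hker, natDegree_X_pow]

end TruncatedPolynomial

end TruncatedPolynomial

section Similarity

open Module Kronecker

theorem rank_blockDiagonal' {K ι : Type*} [Field K] [Fintype ι] [DecidableEq ι] {m n : ι → Type*}
    [∀ i, Fintype (n i)] (M : ∀ i, Matrix (m i) (n i) K) :
    (Matrix.blockDiagonal' M).rank = ∑ i, (M i).rank := by
  let toRanges := (LinearMap.piMap fun i => (M i).mulVecLin.rangeRestrict).comp
    (LinearEquiv.piCurry K fun i (_ : n i) => K).toLinearMap
  let ofRanges := (LinearEquiv.piCurry K fun i (_ : m i) => K).symm.toLinearMap.comp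
    (LinearMap.piMap fun i => (LinearMap.range (M i).mulVecLin).subtype)
  have hsurj : Function.Surjective toRanges :=
    (Function.Surjective.piMap fun i => (M i).mulVecLin.surjective_rangeRestrict).comp
      (LinearEquiv.piCurry K fun i (_ : n i) => K).surjective
  have hinj : Function.Injective ofRanges :=
    (LinearEquiv.piCurry K fun i (_ : m i) => K).symm.injective.comp
      (Function.Injective.piMap fun i => (LinearMap.range (M i).mulVecLin).subtype_injective)
  have hM : (Matrix.blockDiagonal' M).mulVecLin = ofRanges.comp toRanges := by
    refine LinearMap.ext fun v => funext fun ⟨i, a⟩ => ?_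
    have hcoord : ofRanges (toRanges v) ⟨i, a⟩ = (M i).mulVec (fun b => v ⟨i, b⟩) a := rfl
    rw [LinearMap.comp_apply, hcoord, Matrix.mulVecLin_apply, Matrix.mulVec, dotProduct,
      Fintype.sum_sigma, Finset.sum_eq_single i]
    · simp [Matrix.blockDiagonal'_apply_eq, Matrix.mulVec, dotProduct]
    · exact fun j _ hj => Finset.sum_eq_zero fun b _ => by
        rw [Matrix.blockDiagonal'_apply_ne _ _ _ hj.symm, zero_mul]
    · simp
  rw [Matrix.rank, hM, LinearMap.range_comp_of_range_eq_top _ (LinearMap.range_eq_top.2 hsurj),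
    LinearMap.finrank_range_of_inj hinj, finrank_pi_fintype]
  rfl

namespace MatSimilar

variable {F m n : Type*} [Field F] [Fintype m] [Fintype n] {A : Matrix m m F} {B : Matrix n n F}

theorem rank_eq (h : MatSimilar F A B) : A.rank = B.rank := by
  obtain ⟨e, he⟩ := h
  have hrange : B.mulVecLin.range = A.mulVecLin.range.map e.toLinearMap := by
    ext v
    simp only [LinearMap.mem_range, Submodule.mem_map, Matrix.mulVecLin_apply,
      e.surjective.exists, ← he, exists_exists_eq_and, LinearEquiv.coe_coe]
  rw [Matrix.rank, Matrix.rank, hrange]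
  exact (e.finrank_map_eq _).symm

variable [DecidableEq m] [DecidableEq n]

theorem sub_one (h : MatSimilar F A B) : MatSimilar F (A - 1) (B - 1) :=
  h.imp fun e he v => by simp only [Matrix.sub_mulVec, Matrix.one_mulVec, map_sub, he]

theorem pow (h : MatSimilar F A B) (k : ℕ) : MatSimilar F (A ^ k) (B ^ k) := by
  refine h.imp fun e he v => ?_
  induction k generalizing v with
  | zero => simp
  | succ k ih => rw [pow_succ, pow_succ, ← Matrix.mulVec_mulVec, ← Matrix.mulVec_mulVec, ih, he]

end MatSimilar

theorem rank_toMatrix_sub_one_pow {R A ι : Type*} [CommRing R] [CommRing A] [Algebra R A]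
    [Fintype ι] [DecidableEq ι] (b : Basis ι R A) (z : A) (k : ℕ) :
    ((LinearMap.toMatrix b b (LinearMap.mulLeft R (1 + z)) - 1) ^ k).rank =
      finrank R (LinearMap.range (LinearMap.mulLeft R z ^ k)) := by
  have h : LinearMap.mulLeft R (1 + z) = 1 + LinearMap.mulLeft R z := by
    ext
    simp [add_mul]
  rw [h, map_add, LinearMap.toMatrix_one, add_sub_cancel_left, LinearMap.toMatrix_pow,
    Matrix.rank_eq_finrank_range_toLin _ b b, Matrix.toLin_toMatrix]

theorem rank_jordanBlock_sub_one_pow (F : Type*) [Field F] (n k : ℕ) :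
    ((jordanBlock F n - 1) ^ k).rank = n - k := by
  rw [← TruncatedPolynomial.toMatrix_mulLeft_one_add_root, rank_toMatrix_sub_one_pow,
    TruncatedPolynomial.finrank_range_mulLeft_root_pow]

theorem rank_jordanBlockDiag_sub_one_pow (F : Type*) [Field F] {ι : Type} [Fintype ι]
    [DecidableEq ι] (d : ι → ℕ) (k : ℕ) :
    ((jordanBlockDiag F d - 1) ^ k).rank = ∑ i, (d i - k) := by
  have h : (jordanBlockDiag F d - 1) ^ k =
      Matrix.blockDiagonal' fun i => (jordanBlock F (d i) - 1) ^ k := by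
    rw [jordanBlockDiag, ← Matrix.blockDiagonal'_one, ← Matrix.blockDiagonal'_sub,
      ← Matrix.blockDiagonal'_pow]
    rfl
  rw [h, rank_blockDiagonal']
  simp only [rank_jordanBlock_sub_one_pow]

end Similarity

section TruncatedTensor

open Polynomial Module TensorProduct Kronecker
open scoped Polynomial.Bivariate

variable (R : Type*) [CommRing R] (r s : ℕ)

theorem exists_sum_sub_mem_truncationIdeal (p : R[X][Y]) :
    ∃ q : Fin s → R[X], p - ∑ j, C (q j) * (Y - C X) ^ (j : ℕ) ∈ truncationIdeal R r s := by
  set q := taylor X p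
  refine ⟨fun j => q.coeff j, ?_⟩
  have hp : ∑ j ∈ Finset.range (s + (q.natDegree + 1)), C (q.coeff j) * (Y - C X) ^ j = p := by
    rw [← sum_over_range' q (f := fun j c => C c * (Y - C X) ^ j)
      (fun _ => by rw [C_0, zero_mul]) _ (by omega)]
    exact sum_taylor_eq p X
  rw [Fin.sum_univ_eq_sum_range fun j => C (q.coeff j) * (Y - C X : R[X][Y]) ^ j]
  nth_rw 1 [← hp]
  rw [Finset.sum_range_add, add_sub_cancel_left]
  refine Ideal.sum_mem _ fun j _ => ?_
  rw [pow_add, mul_left_comm]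
  exact Ideal.mul_mem_right _ _ (Ideal.subset_span (by simp))

/-- The tensor product of `R[x] / (x ^ r)` and `R[y] / (y ^ s)`. -/
abbrev TruncatedTensor : Type _ :=
  TruncatedPolynomial R r ⊗[R] TruncatedPolynomial R s

namespace TruncatedTensor

/-- The nilpotent element `z = (1 + x)(1 + y) - 1`; multiplication by `1 + z` is the Kronecker
product of two Jordan blocks. -/
noncomputable def shift : TruncatedTensor R r s :=
  (1 + AdjoinRoot.root (X ^ r : R[X])) ⊗ₜ (1 + AdjoinRoot.root (X ^ s : R[X])) - 1

theorem toMatrix_mulLeft_one_add_shift [Nontrivial R] :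
    LinearMap.toMatrix
      ((TruncatedPolynomial.revBasis R r).tensorProduct (TruncatedPolynomial.revBasis R s))
      ((TruncatedPolynomial.revBasis R r).tensorProduct (TruncatedPolynomial.revBasis R s))
      (LinearMap.mulLeft R (1 + shift R r s)) = jordanBlock R r ⊗ₖ jordanBlock R s := by
  rw [← TruncatedPolynomial.toMatrix_mulLeft_one_add_root,
    ← TruncatedPolynomial.toMatrix_mulLeft_one_add_root, ← TensorProduct.toMatrix_map, shift,
    add_sub_cancel]
  congr 1
  ext
  simp

/-- Evaluation of polynomials in `X` and `Y` at `x` and `shift`. -/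
noncomputable def eval : R[X][Y] →ₐ[R] TruncatedTensor R r s :=
  aevalAeval (AdjoinRoot.root (X ^ r : R[X]) ⊗ₜ 1) (shift R r s)

theorem eval_Y : eval R r s Y = shift R r s :=
  aevalAeval_Y _ _

theorem eval_C (p : R[X]) : eval R r s (C p) = AdjoinRoot.mk (X ^ r) p ⊗ₜ 1 := by
  rw [eval, aevalAeval_C, ← AdjoinRoot.aeval_eq]
  exact aeval_algHom_apply (Algebra.TensorProduct.includeLeft : _ →ₐ[R] TruncatedTensor R r s) _ p

theorem eval_Y_sub_C_X :
    eval R r s (Y - C X) =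
      (1 + AdjoinRoot.root (X ^ r : R[X])) ⊗ₜ AdjoinRoot.root (X ^ s : R[X]) := by
  rw [map_sub, eval_Y, eval_C, AdjoinRoot.mk_X, shift, tmul_add, add_tmul,
    Algebra.TensorProduct.one_def]
  abel

theorem isUnit_one_add_root : IsUnit (1 + AdjoinRoot.root (X ^ r : R[X])) :=
  IsNilpotent.isUnit_one_add ⟨r, TruncatedPolynomial.root_pow R r⟩

variable [Nontrivial R]

/-- The basis of powers of `z - x = (1 + x) y`. -/
noncomputable def powBasis : Basis (Fin s) (TruncatedPolynomial R r) (TruncatedTensor R r s) :=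
  (Algebra.TensorProduct.basis _ (TruncatedPolynomial.basis R s)).unitsSMul
    fun j => (isUnit_one_add_root R r).unit ^ (j : ℕ)

theorem powBasis_apply (j : Fin s) : powBasis R r s j = eval R r s ((Y - C X) ^ (j : ℕ)) := by
  rw [powBasis, Basis.unitsSMul_apply, Algebra.TensorProduct.basis_apply, map_pow, eval_Y_sub_C_X,
    Algebra.TensorProduct.tmul_pow, TruncatedPolynomial.basis_apply, Units.smul_def,
    TensorProduct.smul_tmul', Units.val_pow_eq_pow_val, IsUnit.unit_spec, smul_eq_mul, mul_one]

theorem eval_sum (q : Fin s → R[X]) :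
    eval R r s (∑ j, C (q j) * (Y - C X) ^ (j : ℕ)) =
      ∑ j, AdjoinRoot.mk (X ^ r) (q j) • powBasis R r s j := by
  simp only [map_sum, map_mul, eval_C, powBasis_apply, Algebra.smul_def,
    Algebra.TensorProduct.algebraMap_apply, Algebra.algebraMap_self, RingHom.id_apply]

theorem eval_surjective : Function.Surjective (eval R r s) := by
  intro a
  choose q hq using fun j => AdjoinRoot.mk_surjective (g := X ^ r) ((powBasis R r s).repr a j)
  refine ⟨∑ j, C (q j) * (Y - C X) ^ (j : ℕ), ?_⟩
  simp only [eval_sum, hq, Basis.sum_repr]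

theorem ker_eval : RingHom.ker (eval R r s) = truncationIdeal R r s := by
  have hle : truncationIdeal R r s ≤ RingHom.ker (eval R r s) := by
    rw [truncationIdeal, Ideal.span_le, Set.pair_subset_iff]
    constructor
    · rw [SetLike.mem_coe, RingHom.mem_ker, ← C_pow, eval_C, AdjoinRoot.mk_self, zero_tmul]
    · rw [SetLike.mem_coe, RingHom.mem_ker, map_pow, eval_Y_sub_C_X,
        Algebra.TensorProduct.tmul_pow, TruncatedPolynomial.root_pow, tmul_zero]
  refine le_antisymm (fun p hp => ?_) hle
  obtain ⟨q, hq⟩ := exists_sum_sub_mem_truncationIdeal R r s p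
  have hsum : ∑ j, AdjoinRoot.mk (X ^ r) (q j) • powBasis R r s j = 0 := by
    rw [← eval_sum, ← RingHom.mem_ker]
    exact (Submodule.sub_mem_iff_right _ hp).1 (hle hq)
  refine (Submodule.sub_mem_iff_left _ (Ideal.sum_mem _ fun j _ => ?_)).1 hq
  have hqj := Fintype.linearIndependent_iff.1 (powBasis R r s).linearIndependent _ hsum j
  rw [AdjoinRoot.mk_eq_zero] at hqj
  obtain ⟨c, hc⟩ := hqj
  rw [hc, C_mul, C_pow, mul_assoc]
  exact Ideal.mul_mem_right _ _ (Ideal.subset_span (by simp))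

end TruncatedTensor

theorem HasReducedColon.rank_kronecker_jordanBlock_sub_one_pow {F : Type*} [Field F] {r s k a : ℕ}
    {N : ℤ} (h : HasReducedColon (truncationIdeal F r s) N k a) :
    ((jordanBlock F r ⊗ₖ jordanBlock F s - 1) ^ k).rank =
      ((jordanBlock F r ⊗ₖ jordanBlock F s - 1) ^ (k + 1)).rank + a := by
  rw [← TruncatedTensor.ker_eval] at h
  rw [← TruncatedTensor.toMatrix_mulLeft_one_add_shift, rank_toMatrix_sub_one_pow,
    rank_toMatrix_sub_one_pow, ← TruncatedTensor.eval_Y]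
  exact h.finrank_range_mulLeft_pow (TruncatedTensor.eval_surjective F r s)

end TruncatedTensor

section BlockCount

open Kronecker

theorem rank_jordanBlockDiag_sub_one_pow_succ (F : Type*) [Field F] {ι : Type} [Fintype ι]
    [DecidableEq ι] (d : ι → ℕ) (k : ℕ) :
    ((jordanBlockDiag F d - 1) ^ k).rank =
      ((jordanBlockDiag F d - 1) ^ (k + 1)).rank + Fintype.card {i // k < d i} := by
  rw [rank_jordanBlockDiag_sub_one_pow, rank_jordanBlockDiag_sub_one_pow, Fintype.card_subtype,
    Finset.card_filter, ← Finset.sum_add_distrib]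
  refine Finset.sum_congr rfl fun i _ => ?_
  split_ifs <;> omega

theorem card_sigma_fin_subtype {ι : Type*} [Fintype ι] (m : ι → ℕ) (P : ι → Prop)
    [DecidablePred P] :
    Fintype.card {x : (i : ι) × Fin (m i) // P x.1} = ∑ i with P i, m i := by
  rw [Fintype.card_subtype, Finset.card_filter, Fintype.sum_sigma, Finset.sum_filter]
  refine Finset.sum_congr rfl fun i _ => ?_
  split_ifs <;> simp

theorem HasReducedColon.eq_sum_of_matSimilar {F : Type*} [Field F] {r s k a t : ℕ} {N : ℤ}
    {μ m : Fin t → ℕ} (h : HasReducedColon (truncationIdeal F r s) N k a)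
    (hsim : MatSimilar F (jordanBlock F r ⊗ₖ jordanBlock F s)
      (jordanBlockDiag F (fun x : (i : Fin t) × Fin (m i) => μ x.1))) :
    a = ∑ i with k < μ i, m i := by
  have hrank (l : ℕ) := (hsim.sub_one.pow l).rank_eq
  have hkron := h.rank_kronecker_jordanBlock_sub_one_pow
  rwa [hrank, hrank, rank_jordanBlockDiag_sub_one_pow_succ, card_sigma_fin_subtype m (k < μ ·),
    Nat.add_left_cancel_iff, eq_comm] at hkron

end BlockCount

section AlternatingSum

theorem sum_filter_lt_succ {M : Type*} [AddCommMonoid M] {n : ℕ} (f : Fin (n + 1) → M) (i : Fin n) :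
    ∑ j with j < i.succ, f j = ∑ j with j < i.castSucc, f j + f i.castSucc := by
  have h : Finset.univ.filter (· < i.succ) =
      insert i.castSucc (Finset.univ.filter (· < i.castSucc)) := by
    ext j
    simp [Fin.lt_def, Fin.ext_iff, le_iff_eq_or_lt]
  rw [h, Finset.sum_insert (by simp), add_comm]

theorem eq_alternating_sum_of_add_add_two_mul_sum_eq {R : Type*} [CommRing R] {t : ℕ}
    {μ m : Fin t → R} {n : R} (h : ∀ i, μ i + m i + 2 * ∑ j with j < i, m j = n) (i : Fin t) :
    m i = (-1) ^ (i : ℕ) * n +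
      2 * (∑ j with j < i, (-1) ^ ((i : ℕ) - (j : ℕ) - 1) * μ j) - μ i := by
  obtain _ | t := t
  · exact i.elim0
  induction i using Fin.induction with
  | zero => simpa [eq_sub_iff_add_eq, add_comm] using h 0
  | succ i ih =>
    have hsucc := h i.succ
    have hsign : ∑ j with j < i.castSucc, (-1) ^ ((i.succ : ℕ) - (j : ℕ) - 1) * μ j =
        -∑ j with j < i.castSucc, (-1) ^ ((i.castSucc : ℕ) - (j : ℕ) - 1) * μ j := by
      rw [← Finset.sum_neg_distrib]
      refine Finset.sum_congr rfl fun j hj => ?_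
      have hji : (j : ℕ) < i := (Finset.mem_filter.1 hj).2
      rw [Fin.val_succ, Fin.val_castSucc, Nat.sub_right_comm, Nat.add_sub_cancel,
        ← Nat.sub_add_cancel (Nat.sub_pos_of_lt hji), Nat.add_sub_cancel, pow_succ]
      ring
    rw [sum_filter_lt_succ] at hsucc ⊢
    rw [hsign, Fin.val_succ, Fin.val_castSucc, Nat.add_sub_cancel_left, Nat.sub_self, pow_zero]
    rw [Fin.val_castSucc] at ih
    linear_combination hsucc - h i.castSucc - ih

end AlternatingSum

section ClosedFormula

open Kronecker

theorem add_mult_add_two_mul_sum_eq_of_matSimilar {F : Type*} [Field F] {r s t : ℕ}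
    {μ m : Fin t → ℕ} (hμ : StrictAnti μ) (hμpos : ∀ i, 0 < μ i) (hm : ∀ i, 1 ≤ m i)
    (hsim : MatSimilar F (jordanBlock F r ⊗ₖ jordanBlock F s)
      (jordanBlockDiag F (fun x : (i : Fin t) × Fin (m i) => μ x.1))) (i : Fin t) :
    μ i + m i + 2 * ∑ j with j < i, m j = r + s := by
  obtain ⟨k, hk⟩ := Nat.exists_eq_succ_of_ne_zero (hμpos i).ne'
  have hlt : Finset.univ.filter (k + 1 < μ ·) = Finset.univ.filter (· < i) := by
    ext j
    simp [← Nat.succ_eq_add_one, ← hk, hμ.lt_iff_gt]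
  have hle : Finset.univ.filter (k < μ ·) = insert i (Finset.univ.filter (· < i)) := by
    ext j
    simp [Nat.lt_iff_add_one_le, ← Nat.succ_eq_add_one, ← hk, hμ.le_iff_ge,
      le_iff_eq_or_lt (a := j)]
  obtain ⟨a, ha⟩ := exists_hasReducedColon_truncationIdeal F r s k
  obtain ⟨b, hb, hab⟩ := ha.exists_succ
  have ha_eq := ha.eq_sum_of_matSimilar hsim
  have hb_eq := hb.eq_sum_of_matSimilar hsim
  rw [hle, Finset.sum_insert (by simp)] at ha_eq
  rw [hlt] at hb_eq
  have := hm i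
  omega

theorem stmt_4_general {F : Type*} [Field F]
    (r s : ℕ) (t : ℕ) (μ : Fin t → ℕ) (m : Fin t → ℕ)
    (hμ : StrictAnti μ) (hμpos : ∀ i, 0 < μ i) (hm : ∀ i, 1 ≤ m i)
    (hsim : MatSimilar F (jordanBlock F r ⊗ₖ jordanBlock F s)
      (jordanBlockDiag F (fun x : (i : Fin t) × Fin (m i) => μ x.1))) :
    ∀ i : Fin t, (m i : ℤ) = (-1) ^ (i : ℕ) * ((r : ℤ) + s) +
      2 * (∑ j ∈ Finset.univ.filter (fun j => j < i),
        (-1 : ℤ) ^ ((i : ℕ) - (j : ℕ) - 1) * (μ j : ℤ)) - μ i :=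
  eq_alternating_sum_of_add_add_two_mul_sum_eq fun i => by
    exact_mod_cast add_mult_add_two_mul_sum_eq_of_matSimilar hμ hμpos hm hsim i

end ClosedFormula

/-- Closed formula `m_i = (−1)^{i−1}(r+s) + 2·Σ_{j=1}^{i−1} (−1)^{i−1−j} μ_j − μ_i`
(indices written 1-based; here `i j : Fin t` are 0-based). -/
theorem stmt_4 {F : Type*} [Field F] (p : ℕ) (hp : p.Prime) [CharP F p]
    (r s : ℕ) (hr : 0 < r) (hs : 0 < s)
    (t : ℕ) (μ : Fin t → ℕ) (m : Fin t → ℕ)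
    (hμ : StrictAnti μ) (hμpos : ∀ i, 0 < μ i) (hm : ∀ i, 1 ≤ m i)
    (hsim : MatSimilar F (jordanBlock F r ⊗ₖ jordanBlock F s)
      (jordanBlockDiag F (fun x : (i : Fin t) × Fin (m i) => μ x.1))) :
    ∀ i : Fin t, (m i : ℤ) = (-1) ^ (i : ℕ) * ((r : ℤ) + s) +
      2 * (∑ j ∈ Finset.univ.filter (fun j => j < i),
        (-1 : ℤ) ^ ((i : ℕ) - (j : ℕ) - 1) * (μ j : ℤ)) - μ i :=
  stmt_4_general r s t μ m hμ hμpos hm hsim
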